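/- Let σ_Z² > 0, let Z be a Gaussian random variable with mean 0 and variance σ_Z², and let a > 0. For j ∈ ℤ let I_j = [(j − 1/2)·a, (j + 1/2)·a). Then there exist constants c > 0 and a₀ > 0, depending only on σ_Z², such that for all a ≥ a₀·σ_Z, Σ_{j∈ℤ} j² · P[Z ∈ I_j] ≤ c · exp(−a²/(8σ_Z²)). -/

import Mathlib

open ProbabilityTheory NNReal

/-!
If the noise lands in the cell of index `j ≠ 0`, it has the sign of `j` and absolute value at least
`(|j| - 1/2) a`. With `t = a² / σ²`, the one-sided sub-Gaussian tail bound gives this event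
probability at most `exp (-t (|j| - 1/2)² / 2)`, and `(|j| - 1/2)² = 1/4 + (j² - |j|)` splits off
the factor `exp (-t / 8)` of a nearest-neighbour error. What remains is a theta-like series in `j`;
since `|j| ≤ j²` for integers, it decreases in `t`, so it is bounded as long as `t` stays away
from `0`.
-/

open MeasureTheory

section ErrorMomentConst

/-- The constant multiplying `exp (-t / 8)` in the bound on the `k`-th absolute moment of the
decoding error. The exponent `j² - |j|` is `(|j| - 1/2)² - 1/4`, i.e. the nearest-neighbour
contribution has been factored out. -/
noncomputable def errorMomentConst (k : ℕ) (t : ℝ) : ℝ :=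
  ∑' j : ℤ, |(j : ℝ)| ^ k * Real.exp (-t * ((j : ℝ) ^ 2 - |(j : ℝ)|) / 2)

variable {t : ℝ}

lemma summable_abs_pow_mul_exp_neg_sq_sub_abs (k : ℕ) (ht : 0 < t) :
    Summable fun j : ℤ ↦ |(j : ℝ)| ^ k * Real.exp (-t * ((j : ℝ) ^ 2 - |(j : ℝ)|) / 2) := by
  have hT : 0 < t / (2 * Real.pi) := by positivity
  refine (summable_pow_mul_jacobiTheta₂_term_bound (t / (4 * Real.pi)) hT k).congr fun j ↦ ?_
  rw [Int.cast_abs]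
  congr 2
  field

lemma errorMomentConst_pos (k : ℕ) (ht : 0 < t) : 0 < errorMomentConst k t :=
  (summable_abs_pow_mul_exp_neg_sq_sub_abs k ht).tsum_pos (fun j ↦ by positivity) 1 (by simp)

lemma abs_intCast_le_sq (j : ℤ) : |(j : ℝ)| ≤ (j : ℝ) ^ 2 := by
  rw [← sq_abs]
  exact_mod_cast Int.le_self_sq |j|

lemma antitoneOn_errorMomentConst (k : ℕ) :
    AntitoneOn (errorMomentConst k) (Set.Ioi 0) := by
  intro s hs t ht hst
  refine (summable_abs_pow_mul_exp_neg_sq_sub_abs k ht).tsum_le_tsum (fun j ↦ ?_)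
    (summable_abs_pow_mul_exp_neg_sq_sub_abs k hs)
  have hj : 0 ≤ (j : ℝ) ^ 2 - |(j : ℝ)| := sub_nonneg.2 (abs_intCast_le_sq j)
  gcongr

end ErrorMomentConst

/-- The cell `I_j` of noise values for which minimum-distance decoding of a uniform constellation
of spacing `a` is off by exactly `j` positions. -/
def decisionCell (a : ℝ) (j : ℤ) : Set ℝ :=
  Set.Ico (((j : ℝ) - 1 / 2) * a) (((j : ℝ) + 1 / 2) * a)

section SubGaussian

variable {Ω : Type*} {mΩ : MeasurableSpace Ω} {μ : Measure Ω} {X : Ω → ℝ} {σ2 : ℝ≥0} {a : ℝ}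

lemma isFiniteMeasure_of_hasSubgaussianMGF (hX : HasSubgaussianMGF X σ2 μ) :
    IsFiniteMeasure μ := by
  simpa [integrable_const_iff] using hX.integrable_exp_mul 0

lemma hasSubgaussianMGF_id_gaussianReal (σ2 : ℝ≥0) :
    HasSubgaussianMGF id σ2 (gaussianReal 0 σ2) where
  integrable_exp_mul := integrable_exp_mul_gaussianReal
  mgf_le t := by simp [mgf_id_gaussianReal]

lemma measureReal_preimage_decisionCell_le (hX : HasSubgaussianMGF X σ2 μ) (ha : 0 ≤ a)
    {j : ℤ} (hj : j ≠ 0) :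
    μ.real (X ⁻¹' decisionCell a j) ≤ Real.exp (-((|(j : ℝ)| - 1 / 2) * a) ^ 2 / (2 * σ2)) := by
  have := isFiniteMeasure_of_hasSubgaussianMGF hX
  have habs : (1 : ℝ) ≤ |(j : ℝ)| := by exact_mod_cast Int.one_le_abs hj
  have hdist : 0 ≤ (|(j : ℝ)| - 1 / 2) * a := mul_nonneg (by linarith) ha
  rcases hj.lt_or_gt with hneg | hpos
  · refine (measureReal_mono fun ω hω ↦ ?_).trans (hX.neg.measure_ge_le hdist)
    have hupper : X ω < ((j : ℝ) + 1 / 2) * a := hω.2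
    rw [Set.mem_ofPred_eq, Pi.neg_apply, abs_of_neg (Int.cast_lt_zero.2 hneg)]
    linarith
  · refine (measureReal_mono fun ω hω ↦ ?_).trans (hX.measure_ge_le hdist)
    rw [Set.mem_ofPred_eq, abs_of_pos (Int.cast_pos.2 hpos)]
    exact hω.1

lemma abs_pow_mul_measureReal_preimage_decisionCell_le (hX : HasSubgaussianMGF X σ2 μ)
    (ha : 0 ≤ a) {k : ℕ} (hk : k ≠ 0) (j : ℤ) :
    |(j : ℝ)| ^ k * μ.real (X ⁻¹' decisionCell a j) ≤
      |(j : ℝ)| ^ k * Real.exp (-(a ^ 2 / σ2) * ((j : ℝ) ^ 2 - |(j : ℝ)|) / 2) *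
        Real.exp (-a ^ 2 / (8 * σ2)) := by
  rcases eq_or_ne j 0 with rfl | hj
  · simp [hk]
  rw [mul_assoc, ← Real.exp_add]
  have hexponent : -((|(j : ℝ)| - 1 / 2) * a) ^ 2 / (2 * σ2) =
      -(a ^ 2 / σ2) * ((j : ℝ) ^ 2 - |(j : ℝ)|) / 2 + -a ^ 2 / (8 * σ2) := by
    rw [← sq_abs (j : ℝ)]
    ring
  rw [← hexponent]
  gcongr
  exact measureReal_preimage_decisionCell_le hX ha hj

lemma summable_abs_pow_mul_measureReal_preimage_decisionCell (hX : HasSubgaussianMGF X σ2 μ)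
    (hσ2 : 0 < σ2) (ha : 0 < a) {k : ℕ} (hk : k ≠ 0) :
    Summable fun j : ℤ ↦ |(j : ℝ)| ^ k * μ.real (X ⁻¹' decisionCell a j) :=
  .of_nonneg_of_le (fun j ↦ by positivity)
    (abs_pow_mul_measureReal_preimage_decisionCell_le hX ha.le hk)
    ((summable_abs_pow_mul_exp_neg_sq_sub_abs k (by positivity)).mul_right _)

lemma tsum_abs_pow_mul_measureReal_preimage_decisionCell_le (hX : HasSubgaussianMGF X σ2 μ)
    (hσ2 : 0 < σ2) (ha : 0 < a) {k : ℕ} (hk : k ≠ 0) :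
    ∑' j : ℤ, |(j : ℝ)| ^ k * μ.real (X ⁻¹' decisionCell a j) ≤
      errorMomentConst k (a ^ 2 / σ2) * Real.exp (-a ^ 2 / (8 * σ2)) := by
  rw [errorMomentConst, ← _root_.tsum_mul_right]
  exact (summable_abs_pow_mul_measureReal_preimage_decisionCell hX hσ2 ha hk).tsum_le_tsum
    (abs_pow_mul_measureReal_preimage_decisionCell_le hX ha.le hk)
    ((summable_abs_pow_mul_exp_neg_sq_sub_abs k (by positivity)).mul_right _)

end SubGaussian

theorem stmt_11_general {k : ℕ} (hk : k ≠ 0) {a₀ : ℝ} (ha₀ : 0 < a₀) :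
    ∃ c > (0 : ℝ), ∀ {Ω : Type*} {mΩ : MeasurableSpace Ω} {μ : Measure Ω} {X : Ω → ℝ} {σ2 : ℝ≥0},
      0 < σ2 → HasSubgaussianMGF X σ2 μ → ∀ a : ℝ, a₀ * Real.sqrt σ2 ≤ a →
        (Summable fun j : ℤ ↦ |(j : ℝ)| ^ k * μ.real (X ⁻¹' decisionCell a j)) ∧
        ∑' j : ℤ, |(j : ℝ)| ^ k * μ.real (X ⁻¹' decisionCell a j) ≤
          c * Real.exp (-a ^ 2 / (8 * σ2)) := by
  refine ⟨errorMomentConst k (a₀ ^ 2), errorMomentConst_pos k (by positivity),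
    fun {_ _ _ _ σ2} hσ2 hX a ha ↦ ?_⟩
  have ha_pos : 0 < a := lt_of_lt_of_le (by positivity) ha
  have hsnr : a₀ ^ 2 ≤ a ^ 2 / σ2 := by
    rw [le_div_iff₀ (by positivity), ← Real.sq_sqrt σ2.coe_nonneg, ← mul_pow]
    gcongr
  refine ⟨summable_abs_pow_mul_measureReal_preimage_decisionCell hX hσ2 ha_pos hk,
    (tsum_abs_pow_mul_measureReal_preimage_decisionCell_le hX hσ2 ha_pos hk).trans ?_⟩
  gcongr
  have ha₀_sq : 0 < a₀ ^ 2 := by positivity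
  exact antitoneOn_errorMomentConst k ha₀_sq (ha₀_sq.trans_le hsnr) hsnr

/-- Lemma 2 of the paper: for a centered Gaussian `Z` of variance `σ_Z²` and
the intervals `I_j = [(j−1/2)a, (j+1/2)a)` of a uniform constellation of
spacing `a`, there are constants `c > 0` and `a₀ > 0` depending only on `σ_Z²`
such that for all `a ≥ a₀ σ_Z`,
`Σ_{j∈ℤ} j² P[Z ∈ I_j] ≤ c exp(−a²/(8 σ_Z²))`. -/
theorem stmt_11 (σZ2 : ℝ≥0) (hσZ2 : 0 < σZ2) :
    ∃ c > (0 : ℝ), ∃ a₀ > (0 : ℝ), ∀ a : ℝ, a₀ * Real.sqrt σZ2 ≤ a →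
      (∑' j : ℤ, ((j : ℝ)) ^ 2 *
          ((gaussianReal 0 σZ2) (Set.Ico (((j : ℝ) - 1 / 2) * a) (((j : ℝ) + 1 / 2) * a))).toReal)
        ≤ c * Real.exp (-a ^ 2 / (8 * σZ2)) := by
  obtain ⟨c, hc, hbound⟩ := stmt_11_general two_ne_zero one_pos
  refine ⟨c, hc, 1, one_pos, fun a ha ↦ ?_⟩
  have h := (hbound hσZ2 (hasSubgaussianMGF_id_gaussianReal σZ2) a ha).2
  simpa only [sq_abs, Measure.real, Set.preimage_id, decisionCell] using h
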